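/- Let φ: ℕ → ℝ⁺ be non-decreasing and suppose log b = liminf_{n→∞} (log log φ(n))/n satisfies 1 < b ≤ ∞ (so that liminf (log φ(n))/n = ∞). Then the Hausdorff dimension of E'(φ) = {x ∈ [0,1) : ∃ 1 ≤ k < n with a'_k(x) ≥ φ(n) and a'_n(x) ≥ φ(n) for infinitely many n} is at most 1/(b+1) (interpreted as 0 when b = ∞). -/

import Mathlib

open Filter MeasureTheory Set

/-- The Gauss map `T(x) = {1/x}` (with `T(0) = 0`). -/
noncomputable def gaussMap (x : ℝ) : ℝ := Int.fract x⁻¹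

/-- `cfA x n` is the `n`-th partial quotient `aₙ(x)` of the continued fraction
expansion of `x` (for `n ≥ 1`): `aₙ(x) = ⌊1 / T^{n-1}(x)⌋`. -/
noncomputable def cfA (x : ℝ) (n : ℕ) : ℕ := ⌊(gaussMap^[n - 1] x)⁻¹⌋₊

/-- `cfA' x n = aₙ'(x)`: equal to `aₙ(x)` if `aₙ(x)` is prime, and `0` otherwise. -/
noncomputable def cfA' (x : ℝ) (n : ℕ) : ℕ := if (cfA x n).Prime then cfA x n else 0

/-- The set `E'(φ)` of `x ∈ [0,1)` having, for infinitely many `n`, two distinct indices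
`1 ≤ k ≠ l ≤ n` with prime partial quotients `aₖ'(x), aₗ'(x) ≥ φ(n)`. -/
noncomputable def Eset (φ : ℕ → ℝ) : Set ℝ :=
  {x | x ∈ Set.Ico (0 : ℝ) 1 ∧
    {n : ℕ | ∃ k l : ℕ, 1 ≤ k ∧ k ≤ n ∧ 1 ≤ l ∧ l ≤ n ∧ k ≠ l ∧
      φ n ≤ (cfA' x k : ℝ) ∧ φ n ≤ (cfA' x l : ℝ)}.Infinite}

/-- All iterates under the Gauss map lie in `(0,1)`. -/
def GoodCF (x : ℝ) : Prop := ∀ n, gaussMap^[n] x ∈ Set.Ioo (0 : ℝ) 1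

/-- `Σ_{j<m} log a_{j+1}(x)`. -/
noncomputable def cfL (x : ℝ) (m : ℕ) : ℝ := ∑ j ∈ Finset.range m, Real.log (cfA x (j + 1))

lemma gaussMap_zero' : gaussMap 0 = 0 := by simp [gaussMap]

lemma good_of_frequently {x : ℝ} (hx : x ∈ Set.Ico (0 : ℝ) 1)
    (h : ∀ N, ∃ n, N ≤ n ∧ gaussMap^[n] x ≠ 0) : GoodCF x := by
  have hne : ∀ n, gaussMap^[n] x ≠ 0 := by
    intro n h0
    obtain ⟨m, hm, hmx⟩ := h n
    apply hmx
    obtain ⟨k, rfl⟩ := Nat.exists_eq_add_of_le' hm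
    rw [Function.iterate_add_apply, h0]
    exact Function.iterate_fixed gaussMap_zero' k
  have hm : ∀ n, gaussMap^[n] x ∈ Set.Ico (0 : ℝ) 1 := by
    intro n
    cases n with
    | zero => simpa using hx
    | succ n =>
      rw [Function.iterate_succ_apply']
      exact ⟨Int.fract_nonneg _, Int.fract_lt_one _⟩
  intro n
  exact ⟨lt_of_le_of_ne (hm n).1 (hne n).symm, (hm n).2⟩

lemma good_inv {x : ℝ} (hx : GoodCF x) (j : ℕ) :
    1 ≤ cfA x (j + 1) ∧
      (gaussMap^[j] x)⁻¹ = (cfA x (j + 1) : ℝ) + gaussMap^[j + 1] x := by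
  obtain ⟨h0, h1⟩ := hx j
  have hinv : 1 ≤ (gaussMap^[j] x)⁻¹ := (one_le_inv₀ h0).2 h1.le
  refine ⟨?_, ?_⟩
  · simp only [cfA, Nat.add_sub_cancel]
    exact Nat.le_floor (by simpa using hinv)
  · rw [Function.iterate_succ_apply']
    simp only [cfA, Nat.add_sub_cancel, gaussMap]
    rw [natCast_floor_eq_intCast_floor (by linarith)]
    exact (Int.floor_add_fract _).symm

lemma good_le {x : ℝ} (hx : GoodCF x) (j : ℕ) :
    gaussMap^[j] x ≤ Real.exp (-Real.log (cfA x (j + 1))) := by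
  obtain ⟨h1, h2⟩ := good_inv hx j
  have hpos : (0 : ℝ) < cfA x (j + 1) := by exact_mod_cast h1
  rw [Real.exp_neg, Real.exp_log hpos]
  rw [← inv_inv (gaussMap^[j] x), h2]
  apply inv_anti₀ hpos
  linarith [(hx (j + 1)).1]

lemma good_dist {x y : ℝ} (hx : GoodCF x) (hy : GoodCF y) (m : ℕ)
    (h : ∀ j < m, cfA x (j + 1) = cfA y (j + 1)) :
    |x - y| ≤ Real.exp (-(2 * cfL x m)) * |gaussMap^[m] x - gaussMap^[m] y| := by
  induction m with
  | zero => simp [cfL]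
  | succ m ih =>
    refine (ih fun j hj => h j (by omega)).trans ?_
    have e1 : cfL x (m + 1) = cfL x m + Real.log (cfA x (m + 1)) := by
      simp [cfL, Finset.sum_range_succ]
    have e2 : Real.exp (-(2 * cfL x (m + 1))) = Real.exp (-(2 * cfL x m)) *
        (Real.exp (-Real.log (cfA x (m + 1))) * Real.exp (-Real.log (cfA x (m + 1)))) := by
      rw [← Real.exp_add, ← Real.exp_add, e1]; ring_nf
    rw [e2, mul_assoc]
    apply mul_le_mul_of_nonneg_left _ (Real.exp_pos _).le
    obtain ⟨-, hx2⟩ := good_inv hx m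
    obtain ⟨-, hy2⟩ := good_inv hy m
    have hxl := good_le hx m
    have hyl := good_le hy m
    have hx0 := (hx m).1
    have hy0 := (hy m).1
    rw [← h m (by omega)] at hy2 hyl
    set u := gaussMap^[m] x
    set v := gaussMap^[m] y
    have key : u - v = -(u * v * (gaussMap^[m + 1] x - gaussMap^[m + 1] y)) := by
      have : gaussMap^[m + 1] x - gaussMap^[m + 1] y = u⁻¹ - v⁻¹ := by rw [hx2, hy2]; ring
      rw [this]; field_simp; ring
    rw [key, abs_neg, abs_mul, abs_of_pos (mul_pos hx0 hy0)]
    gcongr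

lemma tsum_pi_prod (g : ℕ → ENNReal) (m : ℕ) :
    ∑' a : Fin m → ℕ, ∏ i, g (a i) = (∑' k, g k) ^ m := by
  induction m with
  | zero => simp
  | succ m ih =>
    rw [← (Fin.consEquiv (fun _ : Fin (m + 1) => ℕ)).tsum_eq, ENNReal.tsum_prod']
    simp only [Fin.consEquiv_apply, Fin.prod_univ_succ, Fin.cons_zero, Fin.cons_succ]
    simp_rw [ENNReal.tsum_mul_left, ih, ENNReal.tsum_mul_right]
    rw [pow_succ, mul_comm]

/-- Growth lemma. -/
lemma growth (L : ℕ → ℝ) (μ lam lam2 : ℝ) (h1 : 0 < μ) (h2 : μ < lam)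
    (h3 : lam < lam2) (hio : ∀ N, ∃ n, N ≤ n ∧ lam2 ^ n ≤ L n) (N : ℕ) :
    ∃ m, N ≤ m ∧ μ * L m + lam ^ (m + 1) ≤ L (m + 1) := by
  by_contra! hcon
  have hl : 0 < lam := h1.trans h2
  obtain ⟨K, hK1, hK2⟩ : ∃ K : ℝ, L N ≤ K * lam ^ N ∧ lam ≤ K * (lam - μ) := by
    refine ⟨max (L N / lam ^ N) (lam / (lam - μ)), ?_, ?_⟩
    · rw [← div_le_iff₀ (by positivity)]; exact le_max_left _ _
    · rw [← div_le_iff₀ (by linarith)]; exact le_max_right _ _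
  have hb : ∀ n, N ≤ n → L n ≤ K * lam ^ n := by
    intro n hn
    induction n, hn using Nat.le_induction with
    | base => exact hK1
    | succ n hn ih =>
      have a1 := hcon n hn
      have a2 := mul_le_mul_of_nonneg_left ih h1.le
      have a3 := mul_le_mul_of_nonneg_right hK2 (pow_pos hl n).le
      rw [pow_succ] at a1 ⊢
      nlinarith
  have ht : Tendsto (fun n : ℕ => (lam2 / lam) ^ n) atTop atTop :=
    tendsto_pow_atTop_atTop_of_one_lt ((one_lt_div hl).2 h3)
  obtain ⟨M, hM⟩ := eventually_atTop.1 (ht.eventually_gt_atTop K)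
  obtain ⟨n, hn, hn2⟩ := hio (max M N)
  have b1 := hM n (le_trans (le_max_left _ _) hn)
  have b2 := hb n (le_trans (le_max_right _ _) hn)
  rw [div_pow, lt_div_iff₀ (by positivity)] at b1
  linarith

/-- The covering sets. -/
def coverSet (μ lam : ℝ) (m : ℕ) (a : Fin m → ℕ) : Set ℝ :=
  {x | GoodCF x ∧ (∀ j : Fin m, cfA x (j + 1) = a j) ∧
    μ * cfL x m + lam ^ (m + 1) ≤ cfL x (m + 1)}

lemma cfL_nonneg (x : ℝ) (m : ℕ) : 0 ≤ cfL x m :=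
  Finset.sum_nonneg fun _ _ => Real.log_natCast_nonneg _

lemma coverSet_dist {μ lam : ℝ} {m : ℕ} {a : Fin m → ℕ} {x y : ℝ}
    (hx : x ∈ coverSet μ lam m a) (hy : y ∈ coverSet μ lam m a) :
    |x - y| ≤ Real.exp (-lam ^ (m + 1)) * Real.exp (-((1 + μ) * cfL x m)) := by
  obtain ⟨gx, ax, lx⟩ := hx
  obtain ⟨gy, ay, ly⟩ := hy
  have hxy : ∀ j < m, cfA x (j + 1) = cfA y (j + 1) := fun j hj => by
    rw [ax ⟨j, hj⟩, ay ⟨j, hj⟩]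
  have hL : cfL y m = cfL x m := Finset.sum_congr rfl fun j hj => by
    rw [hxy j (Finset.mem_range.1 hj)]
  have e : ∀ z, cfL z (m + 1) = cfL z m + Real.log (cfA z (m + 1)) := fun z => by
    simp [cfL, Finset.sum_range_succ]
  have bx : gaussMap^[m] x ≤ Real.exp (-((μ - 1) * cfL x m + lam ^ (m + 1))) :=
    (good_le gx m).trans (Real.exp_le_exp.2 (by rw [e] at lx; linarith))
  have bY : gaussMap^[m] y ≤ Real.exp (-((μ - 1) * cfL x m + lam ^ (m + 1))) :=
    (good_le gy m).trans (Real.exp_le_exp.2 (by rw [e, hL] at ly; linarith))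
  refine (good_dist gx gy m hxy).trans ?_
  have : |gaussMap^[m] x - gaussMap^[m] y| ≤ Real.exp (-((μ - 1) * cfL x m + lam ^ (m + 1))) := by
    rw [abs_le]; constructor <;> linarith [(gx m).1, (gy m).1]
  refine (mul_le_mul_of_nonneg_left this (Real.exp_pos _).le).trans (le_of_eq ?_)
  rw [← Real.exp_add, ← Real.exp_add]; ring_nf

lemma coverSet_ediam_le {μ lam : ℝ} (hμ : 0 < μ) (m : ℕ) (a : Fin m → ℕ) :
    Metric.ediam (coverSet μ lam m a) ≤ ENNReal.ofReal (Real.exp (-lam ^ (m + 1))) := by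
  apply Metric.ediam_le
  intro x hx y hy
  rw [edist_dist, Real.dist_eq]
  apply ENNReal.ofReal_le_ofReal
  refine (coverSet_dist hx hy).trans ?_
  apply mul_le_of_le_one_right (Real.exp_pos _).le
  rw [Real.exp_le_one_iff]
  have := cfL_nonneg x m
  have : 0 ≤ (1 + μ) * cfL x m := by positivity
  linarith

lemma coverSet_ediam_pow_le {μ lam s : ℝ} (hs : 0 < s) (m : ℕ) (a : Fin m → ℕ) :
    Metric.ediam (coverSet μ lam m a) ^ s ≤
      ENNReal.ofReal (Real.exp (-(s * lam ^ (m + 1)))) *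
        ∏ i, ENNReal.ofReal ((a i : ℝ) ^ (-(s * (1 + μ)))) := by
  rcases (coverSet μ lam m a).eq_empty_or_nonempty with he | ⟨x, hx⟩
  · simp [he, hs]
  · have h1 : Metric.ediam (coverSet μ lam m a) ≤
        ENNReal.ofReal (Real.exp (-lam ^ (m + 1)) * Real.exp (-((1 + μ) * cfL x m))) := by
      apply Metric.ediam_le
      intro z hz y hy
      have : cfL z m = cfL x m := Finset.sum_congr rfl fun j hj => by
        rw [hz.2.1 ⟨j, Finset.mem_range.1 hj⟩, hx.2.1 ⟨j, Finset.mem_range.1 hj⟩]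
      rw [edist_dist, Real.dist_eq, ← this]
      exact ENNReal.ofReal_le_ofReal (coverSet_dist hz hy)
    refine (ENNReal.rpow_le_rpow h1 hs.le).trans (le_of_eq ?_)
    rw [ENNReal.ofReal_rpow_of_pos (by positivity),
      ← ENNReal.ofReal_prod_of_nonneg (fun i _ => by positivity),
      ← ENNReal.ofReal_mul (by positivity)]
    congr 1
    have hprod : ∏ i, (a i : ℝ) ^ (-(s * (1 + μ))) = Real.exp (-(s * (1 + μ)) * cfL x m) := by
      rw [cfL, Finset.mul_sum, Real.exp_sum, ← Fin.prod_univ_eq_prod_range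
        (fun j => Real.exp (-(s * (1 + μ)) * Real.log (cfA x (j + 1))))]
      apply Finset.prod_congr rfl
      intro i _
      have := (good_inv hx.1 i).1
      rw [hx.2.1 i] at this ⊢
      rw [Real.rpow_def_of_pos (by exact_mod_cast this), mul_comm]
    rw [hprod, ← Real.exp_add, ← Real.exp_mul, ← Real.exp_add]
    ring_nf

lemma summable_aux (C s lam : ℝ) (hs : 0 < s) (hl : 1 < lam) (hC : 0 ≤ C) :
    Summable fun m : ℕ => Real.exp (-(s * lam ^ (m + 1))) * C ^ m := by
  have ht : Tendsto (fun n : ℕ => s * (lam - 1) * lam ^ (n + 1)) atTop atTop :=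
    ((tendsto_pow_atTop_atTop_of_one_lt hl).comp (tendsto_add_atTop_nat 1)).const_mul_atTop
      (by nlinarith)
  have hev := ht.eventually_ge_atTop (Real.log (2 * (C + 1)))
  refine summable_of_ratio_norm_eventually_le (r := 1 / 2) (by norm_num) ?_
  filter_upwards [hev] with n hn
  rw [Real.norm_of_nonneg (by positivity), Real.norm_of_nonneg (by positivity)]
  have h1 : -(s * lam ^ (n + 1 + 1)) = -(s * (lam - 1) * lam ^ (n + 1)) + -(s * lam ^ (n + 1)) := by
    ring
  have h2 : Real.exp (-(s * (lam - 1) * lam ^ (n + 1))) * C ≤ 1 / 2 := by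
    have : Real.exp (-(s * (lam - 1) * lam ^ (n + 1))) ≤ (2 * (C + 1))⁻¹ := by
      rw [← Real.exp_log (show (0 : ℝ) < 2 * (C + 1) by positivity), ← Real.exp_neg]
      exact Real.exp_le_exp.2 (by linarith)
    calc _ ≤ (2 * (C + 1))⁻¹ * C := by gcongr
      _ ≤ 1 / 2 := by
        rw [inv_mul_le_iff₀ (by positivity)]; linarith
  rw [h1, Real.exp_add, pow_succ C]
  calc _ = (Real.exp (-(s * (lam - 1) * lam ^ (n + 1))) * C) *
        (Real.exp (-(s * lam ^ (n + 1))) * C ^ n) := by ring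
    _ ≤ _ := by gcongr

lemma total_sum_lt_top {μ lam s : ℝ} (hs : 0 < s) (hl : 1 < lam) (ht : 1 < s * (1 + μ)) :
    ∑' p : (Σ m : ℕ, Fin m → ℕ), Metric.ediam (coverSet μ lam p.1 p.2) ^ s ≠ ⊤ := by
  have hsum : Summable fun k : ℕ => (k : ℝ) ^ (-(s * (1 + μ))) :=
    Real.summable_nat_rpow.2 (by linarith)
  set C : ℝ := ∑' k : ℕ, (k : ℝ) ^ (-(s * (1 + μ))) with hC
  have hC0 : 0 ≤ C := tsum_nonneg fun k => by positivity
  have hCe : ∑' k : ℕ, ENNReal.ofReal ((k : ℝ) ^ (-(s * (1 + μ)))) = ENNReal.ofReal C :=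
    (ENNReal.ofReal_tsum_of_nonneg (fun k => by positivity) hsum).symm
  have hle : ∑' p : (Σ m : ℕ, Fin m → ℕ), Metric.ediam (coverSet μ lam p.1 p.2) ^ s ≤
      ∑' m : ℕ, ENNReal.ofReal (Real.exp (-(s * lam ^ (m + 1))) * C ^ m) := by
    rw [ENNReal.tsum_sigma']
    apply ENNReal.tsum_le_tsum
    intro m
    refine (ENNReal.tsum_le_tsum fun a => coverSet_ediam_pow_le hs m a).trans ?_
    rw [ENNReal.tsum_mul_left,
      tsum_pi_prod (fun k : ℕ => ENNReal.ofReal ((k : ℝ) ^ (-(s * (1 + μ))))), hCe,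
      ENNReal.ofReal_mul (by positivity), ENNReal.ofReal_pow hC0]
  exact ne_top_of_le_ne_top (summable_aux C s lam hs hl hC0).tsum_ofReal_ne_top hle

lemma dim_bound {μ lam : ℝ} (s : NNReal) (hs : 0 < s) (hμ : 0 < μ) (hl : 1 < lam)
    (ht : 1 < (s : ℝ) * (1 + μ)) (E : Set ℝ)
    (hE : ∀ x ∈ E, GoodCF x ∧ ∀ N, ∃ m, N ≤ m ∧ μ * cfL x m + lam ^ (m + 1) ≤ cfL x (m + 1)) :
    dimH E ≤ s := by
  apply dimH_le_of_hausdorffMeasure_ne_top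
  have hr : Tendsto (fun N : ℕ => ENNReal.ofReal (Real.exp (-lam ^ (N + 1)))) atTop (nhds 0) := by
    rw [← ENNReal.ofReal_zero]
    apply ENNReal.tendsto_ofReal
    apply Real.tendsto_exp_neg_atTop_nhds_zero.comp
    exact (tendsto_pow_atTop_atTop_of_one_lt hl).comp (tendsto_add_atTop_nat 1)
  have key := Measure.hausdorffMeasure_le_liminf_tsum (X := ℝ)
    (ι := fun N : ℕ => {p : (Σ m : ℕ, Fin m → ℕ) // N ≤ p.1}) (s : ℝ) E _ hr
    (fun N p => coverSet μ lam p.1.1 p.1.2)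
    (Eventually.of_forall fun N p => by
      refine (coverSet_ediam_le hμ _ _).trans ?_
      apply ENNReal.ofReal_le_ofReal
      apply Real.exp_le_exp.2
      have := pow_le_pow_right₀ hl.le (Nat.succ_le_succ p.2)
      simpa using this)
    (Eventually.of_forall fun N x hx => by
      obtain ⟨g, h⟩ := hE x hx
      obtain ⟨m, hm, hm2⟩ := h N
      exact Set.mem_iUnion.2 ⟨⟨⟨m, fun j => cfA x (j + 1)⟩, hm⟩, g, fun j => rfl, hm2⟩)
  refine ne_top_of_le_ne_top (total_sum_lt_top (μ := μ) (lam := lam) (s := s)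
    (by exact_mod_cast hs) hl ht) (key.trans ?_)
  refine (liminf_le_liminf (v := fun _ : ℕ => ∑' p : (Σ m : ℕ, Fin m → ℕ),
    Metric.ediam (coverSet μ lam p.1 p.2) ^ (s : ℝ)) (Eventually.of_forall fun N => ?_)).trans ?_
  · exact ENNReal.tsum_comp_le_tsum_of_injective Subtype.val_injective
      (fun p : (Σ m : ℕ, Fin m → ℕ) => Metric.ediam (coverSet μ lam p.1 p.2) ^ (s : ℝ))
  · simp

lemma phi_growth (φ : ℕ → ℝ) (hpos : ∀ n, 0 < φ n) (hmono : Monotone φ)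
    (b : ENNReal) (lam : ℝ) (hl : 1 < lam) (hlb : ENNReal.ofReal lam < b)
    (hliminf : Filter.liminf
        (fun n : ℕ => ((Real.log (Real.log (φ n)) / (n : ℝ) : ℝ) : EReal)) atTop
      = ENNReal.log b) :
    ∀ᶠ n in atTop, lam ^ n ≤ Real.log (φ n) := by
  have h1 : (Real.log lam : EReal) < ENNReal.log b := by
    rw [← ENNReal.log_ofReal_of_pos (by linarith)]
    exact ENNReal.log_strictMono hlb
  rw [← hliminf] at h1
  have h2 := eventually_lt_of_lt_liminf h1
  have ht : Tendsto (fun n : ℕ => lam ^ n) atTop atTop := tendsto_pow_atTop_atTop_of_one_lt hl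
  filter_upwards [h2, eventually_ge_atTop 1, ht.eventually_gt_atTop |Real.log (φ 0)|]
    with n hn hn1 hn2
  have hn0 : (0 : ℝ) < n := by exact_mod_cast hn1
  rw [EReal.coe_lt_coe_iff, lt_div_iff₀ hn0, mul_comm, ← Real.log_pow] at hn
  have hlp : 0 < lam ^ n := by positivity
  have hne : Real.log (φ n) ≠ 0 := by
    intro h0
    rw [h0, Real.log_zero] at hn
    exact absurd hn (not_lt.2 (Real.log_nonneg (one_le_pow₀ hl.le)))
  rw [← Real.log_abs (Real.log (φ n)), Real.log_lt_log_iff hlp (abs_pos.2 hne)] at hn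
  have hm : Real.log (φ 0) ≤ Real.log (φ n) := Real.log_le_log (hpos 0) (hmono (Nat.zero_le n))
  rcases le_or_gt 0 (Real.log (φ n)) with h | h
  · rw [abs_of_nonneg h] at hn; exact hn.le
  · rw [abs_of_neg h] at hn
    have := neg_abs_le (Real.log (φ 0))
    linarith

/-- if `log b = liminf (log log φ(n))/n` with `1 < b ≤ ∞`, then the
Hausdorff dimension of `E'(φ)` (in the form with `k < n` and large prime partial
quotients at positions `k` and `n`) is at most `1/(b+1)` (which is `0` for `b = ∞`). -/
theorem dimH_Eset_le (φ : ℕ → ℝ) (hpos : ∀ n, 0 < φ n) (hmono : Monotone φ)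
    (b : ENNReal) (hb : 1 < b)
    (hliminf : Filter.liminf
        (fun n : ℕ => ((Real.log (Real.log (φ n)) / (n : ℝ) : ℝ) : EReal)) atTop
      = ENNReal.log b) :
    dimH {x | x ∈ Set.Ico (0 : ℝ) 1 ∧
        {n : ℕ | ∃ k : ℕ, 1 ≤ k ∧ k < n ∧
          φ n ≤ (cfA' x k : ℝ) ∧ φ n ≤ (cfA' x n : ℝ)}.Infinite}
      ≤ 1 / (b + 1) := by
  refine le_of_forall_gt_imp_ge_of_dense fun c hc => ?_
  obtain ⟨s, hs1, hs2⟩ := ENNReal.lt_iff_exists_nnreal_btwn.1 hc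
  refine le_trans ?_ hs2.le
  have hs0 : 0 < s := by
    have := lt_of_le_of_lt zero_le hs1
    exact_mod_cast this
  have hsb : ENNReal.ofReal (max 1 ((s : ℝ)⁻¹ - 1)) < b := by
    rw [ENNReal.ofReal_max, max_lt_iff]
    refine ⟨by simpa using hb, ?_⟩
    rw [ENNReal.ofReal_sub _ zero_le_one, ENNReal.ofReal_one]
    have h3 : ENNReal.ofReal ((s : ℝ)⁻¹) = (s : ENNReal)⁻¹ := by
      rw [ENNReal.ofReal_inv_of_pos (by exact_mod_cast hs0), ENNReal.ofReal_coe_nnreal]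
    rw [h3]
    have h4 : (s : ENNReal)⁻¹ < b + 1 := by
      rw [one_div] at hs1
      exact ENNReal.inv_lt_iff_inv_lt.1 hs1
    rcases le_total (s : ENNReal)⁻¹ 1 with h6 | h6
    · rw [tsub_eq_zero_of_le h6]
      exact lt_trans zero_lt_one hb
    · exact (ENNReal.cancel_of_ne ENNReal.one_ne_top).tsub_lt_iff_right h6 |>.2 h4
  obtain ⟨μ, hμ1, hμb⟩ := ENNReal.lt_iff_exists_nnreal_btwn.1 hsb
  obtain ⟨lam, hl1, hlb⟩ := ENNReal.lt_iff_exists_nnreal_btwn.1 hμb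
  obtain ⟨lam2, hl2, hl2b⟩ := ENNReal.lt_iff_exists_nnreal_btwn.1 hlb
  have hμ' : max 1 ((s : ℝ)⁻¹ - 1) < μ := by
    rw [← ENNReal.ofReal_coe_nnreal] at hμ1
    exact (ENNReal.ofReal_lt_ofReal_iff_of_nonneg (by positivity)).1 hμ1
  have hμ1' : (1 : ℝ) < μ := lt_of_le_of_lt (le_max_left _ _) hμ'
  have hμs : (s : ℝ)⁻¹ - 1 < μ := lt_of_le_of_lt (le_max_right _ _) hμ'
  have hlr : (μ : ℝ) < lam := by exact_mod_cast hl1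
  have hl2r : (lam : ℝ) < lam2 := by exact_mod_cast hl2
  have hs0' : (0 : ℝ) < s := by exact_mod_cast hs0
  have hph := phi_growth φ hpos hmono b lam2 (by linarith)
    (by rwa [ENNReal.ofReal_coe_nnreal]) hliminf
  obtain ⟨M, hM⟩ := eventually_atTop.1 hph
  refine dim_bound (μ := μ) (lam := lam) s hs0 (by linarith) (by linarith) ?_ _ ?_
  · have h5 : (s : ℝ)⁻¹ < 1 + μ := by linarith
    rw [inv_lt_iff_one_lt_mul₀ hs0'] at h5
    linarith
  · rintro x ⟨hx, hinf⟩
    have hio : ∀ N, ∃ n, N ≤ n ∧ φ (n + 1) ≤ (cfA x (n + 1) : ℝ) := by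
      intro N
      obtain ⟨n, ⟨k, hk1, hkn, -, hn⟩, hNn⟩ := hinf.exists_gt N
      refine ⟨n - 1, by omega, ?_⟩
      rw [Nat.sub_add_cancel (by omega)]
      refine hn.trans ?_
      unfold cfA'
      split_ifs
      · exact le_rfl
      · simp
    have hg : GoodCF x := by
      apply good_of_frequently hx
      intro N
      obtain ⟨n, hn, hn2⟩ := hio N
      refine ⟨n, hn, fun h0 => ?_⟩
      have : cfA x (n + 1) = 0 := by simp [cfA, h0]
      rw [this] at hn2
      have := hpos (n + 1)
      simp at hn2
      linarith
    refine ⟨hg, growth (cfL x) μ lam lam2 (by linarith) hlr hl2r ?_⟩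
    intro N
    obtain ⟨n, hn, hn2⟩ := hio (max N M)
    have hN : N ≤ n := le_trans (le_max_left _ _) hn
    have hMn : M ≤ n := le_trans (le_max_right _ _) hn
    refine ⟨n + 1, by omega, (hM (n + 1) (by omega)).trans ?_⟩
    refine (Real.log_le_log (hpos _) hn2).trans ?_
    have := cfL_nonneg x n
    have e : cfL x (n + 1) = cfL x n + Real.log (cfA x (n + 1)) := by
      simp [cfL, Finset.sum_range_succ]
    linarith
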